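/- For every unordered pair {m_i, m_j} of distinct odd theta characteristics, there are exactly four even theta characteristics n that can be written as n = m_i + m_j + a with a an odd theta characteristic distinct from m_i and m_j. -/

import Mathlib

/-- The parity of a theta characteristic `(μ₁, μ₂, ν₁, ν₂) ∈ F₂⁴`. -/
def thetaParity (m : Fin 4 → ZMod 2) : ZMod 2 := m 0 * m 2 + m 1 * m 3

/-!
Parity is a quadratic form `Q` over `𝔽₂` with nondegenerate polar form `B`. If `Q n = 0` then
`n ≠ x, y`, so `n = x + y + a` has an odd solution `a ≠ x, y` exactly when `Q (v + n) = 1`, where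
`v = x + y`. Translation by `v` is an involution of `{n | Q n ≠ Q (v + n)}` that flips `Q`, so the
required `n` are half of this set. The set is a level set of the nonzero functional `B v`, so it is
itself half of the space.
-/

open Finset

theorem card_mul_card_fiber_of_surjective {G H : Type*} [AddGroup G] [AddGroup H] [Fintype G]
    [Fintype H] [DecidableEq H] (f : G →+ H) (hf : Function.Surjective f) (c : H) :
    Fintype.card H * #{g | f g = c} = Fintype.card G :=
  calc Fintype.card H * #{g | f g = c}
      = ∑ d : H, #{g | f g = d} := by
        simp only [AddMonoidHom.card_fiber_eq_of_mem_range f (hf _) (hf c), sum_const,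
          card_univ, smul_eq_mul]
    _ = Fintype.card G := (card_eq_sum_card_fiberwise fun g _ => mem_univ (f g)).symm

section ZModTwo

variable {V : Type*} [AddCommGroup V] [Module (ZMod 2) V]

theorem add_add_self_cancel_left (v n : V) : v + (v + n) = n := by
  rw [← add_assoc, ZModModule.add_self, zero_add]

theorem two_mul_card_eq_zero_and_apply_add_eq_one [Fintype V] (f : V → ZMod 2) (v : V) :
    2 * #{n | f n = 0 ∧ f (v + n) = 1} = #{n | f n ≠ f (v + n)} := by
  classical
  have translate : #{n | f n = 1 ∧ f (v + n) = 0} = #{n | f n = 0 ∧ f (v + n) = 1} :=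
    card_equiv (Equiv.addLeft v) fun n => by
      simp only [mem_filter_univ, Equiv.coe_addLeft, add_add_self_cancel_left, and_comm]
  have disj : Disjoint (univ.filter fun n => f n = 0 ∧ f (v + n) = 1)
      (univ.filter fun n => f n = 1 ∧ f (v + n) = 0) :=
    disjoint_filter.2 fun n _ h h' => zero_ne_one (h.1.symm.trans h'.1)
  have ne_iff : ∀ a b : ZMod 2, a ≠ b ↔ a = 0 ∧ b = 1 ∨ a = 1 ∧ b = 0 := by decide
  simp only [ne_iff, filter_or, card_union_of_disjoint disj, translate, two_mul]

theorem exists_eq_add_add_iff {p : V → Prop} {x y n : V} (hx : p x) (hy : p y) (hn : ¬p n) :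
    (∃ a, p a ∧ a ≠ x ∧ a ≠ y ∧ n = x + y + a) ↔ p (x + y + n) := by
  constructor
  · rintro ⟨a, ha, -, -, rfl⟩
    rwa [add_add_self_cancel_left]
  · intro h
    have hxn : x ≠ n := fun hxn => hn (hxn ▸ hx)
    have hyn : y ≠ n := fun hyn => hn (hyn ▸ hy)
    refine ⟨x + y + n, h, fun hax => hyn ?_, fun hay => hxn ?_,
      (add_add_self_cancel_left _ _).symm⟩
    · rwa [add_assoc, add_eq_left, ← ZModModule.sub_eq_add, sub_eq_zero] at hax
    · rwa [add_right_comm, add_eq_right, ← ZModModule.sub_eq_add, sub_eq_zero] at hay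

variable (Q : QuadraticForm (ZMod 2) V)

theorem apply_ne_apply_add_iff_polarBilin_eq (v n : V) :
    Q n ≠ Q (v + n) ↔ Q.polarBilin v n = 1 + Q v := by
  rw [QuadraticMap.map_add Q, ← QuadraticMap.polarBilin_apply_apply]
  generalize Q n = a, Q v = b, Q.polarBilin v n = c
  revert a b c
  decide

theorem two_mul_card_apply_ne_apply_add [Fintype V] {v : V} (hv : Q.polarBilin v ≠ 0) :
    2 * #{n | Q n ≠ Q (v + n)} = Fintype.card V := by
  simp only [apply_ne_apply_add_iff_polarBilin_eq]
  exact card_mul_card_fiber_of_surjective (Q.polarBilin v).toAddMonoidHom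
    (LinearMap.surjective hv) (1 + Q v)

theorem four_even_characteristics_of_odd_pair_general [Fintype V] [DecidableEq V] {x y : V}
    (hx : Q x = 1) (hy : Q y = 1) (hxy : Q.polarBilin (x + y) ≠ 0) :
    4 * #{n | Q n = 0 ∧ ∃ a, Q a = 1 ∧ a ≠ x ∧ a ≠ y ∧ n = x + y + a} = Fintype.card V := by
  have even_and_exists_iff (n : V) :
      (Q n = 0 ∧ ∃ a, Q a = 1 ∧ a ≠ x ∧ a ≠ y ∧ n = x + y + a) ↔
        Q n = 0 ∧ Q (x + y + n) = 1 :=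
    and_congr_right fun hn =>
      exists_eq_add_add_iff (p := fun a => Q a = 1) hx hy (hn.trans_ne zero_ne_one)
  calc 4 * #{n | Q n = 0 ∧ ∃ a, Q a = 1 ∧ a ≠ x ∧ a ≠ y ∧ n = x + y + a}
      = 2 * (2 * #{n | Q n = 0 ∧ Q (x + y + n) = 1}) := by
        simp only [even_and_exists_iff, ← mul_assoc, Nat.reduceMul]
    _ = 2 * #{n | Q n ≠ Q (x + y + n)} := by rw [two_mul_card_eq_zero_and_apply_add_eq_one]
    _ = Fintype.card V := two_mul_card_apply_ne_apply_add Q hxy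

end ZModTwo

/-- The parity of theta characteristics in genus two, bundled as a quadratic form over `𝔽₂`. -/
def thetaForm : QuadraticForm (ZMod 2) (Fin 4 → ZMod 2) :=
  QuadraticMap.proj 0 2 + QuadraticMap.proj 1 3

theorem polar_thetaForm (v w : Fin 4 → ZMod 2) :
    QuadraticMap.polar thetaForm v w = v 0 * w 2 + v 2 * w 0 + (v 1 * w 3 + v 3 * w 1) := by
  simp only [QuadraticMap.polar, thetaForm, add_apply, QuadraticMap.proj_apply, Pi.add_apply]
  ring

theorem polarBilin_thetaForm_ne_zero {v : Fin 4 → ZMod 2} (hv : v ≠ 0) :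
    thetaForm.polarBilin v ≠ 0 := by
  contrapose! hv
  have pairing (i : Fin 4) : QuadraticMap.polar thetaForm v (Pi.single i 1) = 0 := by
    rw [← QuadraticMap.polarBilin_apply_apply, hv, LinearMap.zero_apply]
  ext i
  fin_cases i
  · simpa [polar_thetaForm] using pairing 2
  · simpa [polar_thetaForm] using pairing 3
  · simpa [polar_thetaForm] using pairing 0
  · simpa [polar_thetaForm] using pairing 1

/-- For every pair of distinct odd theta characteristics `mᵢ, mⱼ` there are exactly four
even theta characteristics `n` of the form `n = mᵢ + mⱼ + a` with `a` odd, `a ≠ mᵢ, mⱼ`. -/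
theorem four_even_characteristics_of_odd_pair (x y : Fin 4 → ZMod 2)
    (hx : thetaParity x = 1) (hy : thetaParity y = 1) (hxy : x ≠ y) :
    (Finset.univ.filter fun n : Fin 4 → ZMod 2 =>
      thetaParity n = 0 ∧
        ∃ a : Fin 4 → ZMod 2, thetaParity a = 1 ∧ a ≠ x ∧ a ≠ y ∧ n = x + y + a).card = 4 := by
  have hv : x + y ≠ 0 := by rwa [← ZModModule.sub_eq_add, sub_ne_zero]
  exact Nat.eq_of_mul_eq_mul_left four_pos
    (four_even_characteristics_of_odd_pair_general thetaForm hx hy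
      (polarBilin_thetaForm_ne_zero hv))
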